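/- arXiv:quant-ph/0607148 — 2 statements merged into one kernel-verified Lean document; each statement's English description precedes it below -/
import Mathlib

section
/- Let κ ≥ 1 be an integer, let r' ≥ 3 be an odd integer, set r = 2^κ · r', let n and n₀ be positive integers with n > n₀ and r < 2^{n₀}, and let m be a positive integer with 2^n/r − 1 < m < 2^n/r + 1. Then 2^κ · (2/(2^n·m)) · ∑_{j=1}^{(r'−1)/2} sin²(π·m·j/2^{n−κ}) / sin²(π·j/2^{n−κ}) + (2^κ − 1)·m/2^n > (1 − 1/2^{n−n₀} − 1/r') · (1 − (π²/36)·((r'+1)/r' + 1/2^{n−n₀−2} + 1/2^{2(n−n₀)−1})) + 1/r' − 1/(2^κ·r') − 1/2^{n−n₀}. -/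
/-!
Write `M = 2 ^ (n - κ)`, `ε = 1 / 2 ^ (n - n₀) ≤ 1 / 2` and `t = m * r' / M`. The hypotheses on `m`
and `r` imply that `t` differs from `1` by less than `ε`. Bound each term of the sum from
below by `sin x ^ 2 ≤ x ^ 2` in the denominator and `y ^ 2 - y ^ 4 / 3 ≤ sin y ^ 2` in the numerator
(`sq_sub_le_sin_sq`); summing over `j` with the formula for the sum of squares shows that the first
summand on the left is at least `(1 - 1 / r') * t * (1 - π ^ 2 / 36 * ((r' + 1) / r' * t ^ 2))`.
Since `(r' + 1) / r' ≤ 4 / 3` and `t < 1 + ε`, the last factor is at least the corresponding factor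
on the right, and `(1 - 1 / r') * t > 1 - ε - 1 / r' > 0`. This compares the products when the
right-hand factor is nonnegative; when it is negative, the product on the right is negative while
the sum of quotients of squares is nonnegative. The remaining summand `(2 ^ κ - 1) * m / 2 ^ n` equals
`(1 - 1 / 2 ^ κ) * t / r'`, which is compared directly using `t > 1 - ε`.
-/

open Real

/-- The alternating Taylor lower bound for `sin ^ 2`, valid for all `y ≥ 0`: it follows from
`y - y ^ 3 / 6 ≤ sin y` as long as the left side is nonnegative, and is trivial afterwards. -/
lemma sq_sub_le_sin_sq {y : ℝ} (hy : 0 ≤ y) : y ^ 2 - y ^ 4 / 3 ≤ sin y ^ 2 := by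
  rcases le_total (y ^ 2) 3 with h | h
  · have h1 : 0 ≤ y - y ^ 3 / 6 := by nlinarith [mul_nonneg hy (sub_nonneg.2 h)]
    have h2 : (y - y ^ 3 / 6) ^ 2 ≤ sin y ^ 2 := pow_le_pow_left₀ h1 (sin_ge_sub_cube hy) 2
    nlinarith [sq_nonneg (y ^ 3)]
  · nlinarith [sq_nonneg (sin y), mul_nonneg (sq_nonneg y) (sub_nonneg.2 h)]

lemma sum_Icc_sq (J : ℕ) :
    ∑ j ∈ Finset.Icc 1 J, (j : ℝ) ^ 2 = J * (J + 1) * (2 * J + 1) / 6 := by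
  induction J with
  | zero => simp
  | succ k ih =>
    rw [Finset.sum_Icc_succ_top (by omega), ih]
    push_cast
    ring

lemma sin_sq_ratio_lower {m M x : ℝ} (hm : 0 < m) (hM : 0 < M) (hx : 0 < x) (hxM : x < M) :
    m ^ 2 - π ^ 2 * m ^ 4 / (3 * M ^ 2) * x ^ 2 ≤
      sin (π * m * x / M) ^ 2 / sin (π * x / M) ^ 2 := by
  have hpi := pi_pos
  have hs : 0 < sin (π * x / M) := by
    apply sin_pos_of_pos_of_lt_pi (by positivity)
    rw [div_lt_iff₀ hM]
    nlinarith
  have hs2 : sin (π * x / M) ^ 2 ≤ (π * x / M) ^ 2 :=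
    pow_le_pow_left₀ hs.le (sin_le (by positivity)) 2
  have hy := sq_sub_le_sin_sq (y := π * m * x / M) (by positivity)
  calc m ^ 2 - π ^ 2 * m ^ 4 / (3 * M ^ 2) * x ^ 2
      = ((π * m * x / M) ^ 2 - (π * m * x / M) ^ 4 / 3) / (π * x / M) ^ 2 := by
        field_simp
    _ ≤ sin (π * m * x / M) ^ 2 / (π * x / M) ^ 2 := by gcongr
    _ ≤ sin (π * m * x / M) ^ 2 / sin (π * x / M) ^ 2 := by gcongr

lemma sum_lower {m M : ℝ} (J : ℕ) (hm : 0 < m) (hM : 0 < M) (hJM : (J : ℝ) < M) :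
    m ^ 2 * J * (1 - π ^ 2 / 36 * (m / M) ^ 2 * ((2 * J + 1) * (2 * J + 2))) ≤
      ∑ j ∈ Finset.Icc 1 J, sin (π * m * j / M) ^ 2 / sin (π * j / M) ^ 2 := by
  have h : ∑ j ∈ Finset.Icc 1 J, (m ^ 2 - π ^ 2 * m ^ 4 / (3 * M ^ 2) * (j : ℝ) ^ 2) ≤
      ∑ j ∈ Finset.Icc 1 J, sin (π * m * j / M) ^ 2 / sin (π * j / M) ^ 2 := by
    refine Finset.sum_le_sum fun j hj => ?_
    rw [Finset.mem_Icc] at hj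
    have h1 : (0 : ℝ) < j := by exact_mod_cast hj.1
    have h2 : (j : ℝ) ≤ J := by exact_mod_cast hj.2
    exact sin_sq_ratio_lower hm hM h1 (by linarith)
  rw [Finset.sum_sub_distrib, ← Finset.mul_sum, sum_Icc_sq] at h
  simp only [Finset.sum_const, Nat.card_Icc, Nat.add_sub_cancel, nsmul_eq_mul] at h
  refine le_trans (le_of_eq ?_) h
  field_simp
  ring

/-- The inequality in terms of the real parameters `K = 2 ^ κ`, `M = 2 ^ (n - κ)`,
`ε = 1 / 2 ^ (n - n₀)` and `q = r' = 2 * J + 1`. -/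
lemma core {K M m ε q : ℝ} (J : ℕ) (hJ : 1 ≤ J) (hq : q = 2 * J + 1) (hK : 1 ≤ K) (hM : 0 < M)
    (hm : 0 < m) (hε : 0 < ε) (hε2 : ε ≤ 1 / 2) (hqM : q < M)
    (h1 : 1 - ε < m * q / M) (h2 : m * q / M < 1 + ε) :
    (1 - ε - 1 / q) * (1 - π ^ 2 / 36 * ((q + 1) / q + 4 * ε + 2 * ε ^ 2))
        + 1 / q - 1 / (K * q) - ε <
      K * (2 / (K * M * m)) *
        ∑ j ∈ Finset.Icc 1 J, sin (π * m * j / M) ^ 2 / sin (π * j / M) ^ 2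
      + (K - 1) * m / (K * M) := by
  have hJ' : (1 : ℝ) ≤ J := by exact_mod_cast hJ
  have hq3 : 3 ≤ q := by linarith
  have hq0 : 0 < q := by linarith
  have hK0 : 0 < K := by linarith
  have hsum := sum_lower J hm hM (by linarith)
  set S := ∑ j ∈ Finset.Icc 1 J, sin (π * m * j / M) ^ 2 / sin (π * j / M) ^ 2 with hS
  have hS0 : 0 ≤ S := Finset.sum_nonneg fun j _ => by positivity
  obtain ⟨t, ht⟩ : ∃ t, t = m * q / M := ⟨_, rfl⟩
  rw [← ht] at h1 h2
  have hmt : m = t * M / q := by rw [ht]; field_simp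
  have ht0 : 0 < t := by linarith
  obtain ⟨p, hp⟩ : ∃ p, p = 1 / q := ⟨_, rfl⟩
  have hp0 : 0 < p := by rw [hp]; positivity
  have hp3 : p ≤ 1 / 3 := by rw [hp]; exact one_div_le_one_div_of_le (by norm_num) hq3
  obtain ⟨k, hk⟩ : ∃ k, k = 1 / K := ⟨_, rfl⟩
  have hk0 : 0 < k := by rw [hk]; positivity
  have hk1 : k ≤ 1 := by rw [hk, div_le_one hK0]; exact hK
  have hqp : (q + 1) / q = 1 + p := by rw [hp]; field_simp
  have hsecond : (K - 1) * m / (K * M) = (1 - k) * p * t := by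
    rw [hmt, hp, hk]; field_simp
  have hKq : 1 / (K * q) = k * p := by rw [hp, hk]; field_simp
  have hfirst : (1 - p) * t * (1 - π ^ 2 / 36 * ((1 + p) * t ^ 2)) ≤ K * (2 / (K * M * m)) * S := by
    have hJq : (J : ℝ) = (q - 1) / 2 := by linarith
    have hc : 0 ≤ K * (2 / (K * M * m)) := by positivity
    refine le_trans (le_of_eq ?_) (mul_le_mul_of_nonneg_left hsum hc)
    rw [hJq, hp, ht]
    field_simp
    ring
  have hfirst0 : 0 ≤ K * (2 / (K * M * m)) * S := by positivity
  rw [hqp, hsecond, hKq, ← hp]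
  have hA0 : 0 < 1 - ε - p := by linarith
  have hA : 1 - ε - p ≤ (1 - p) * t := by nlinarith
  have ht2 : t ^ 2 ≤ 1 + 2 * ε + ε ^ 2 := by nlinarith
  have hX : (1 + p) * t ^ 2 ≤ 1 + p + 4 * ε + 2 * ε ^ 2 := by
    calc (1 + p) * t ^ 2 ≤ (1 + p) * (1 + 2 * ε + ε ^ 2) := by gcongr
      _ ≤ _ := by nlinarith [mul_pos hp0 hε, mul_nonneg hε.le (sub_nonneg.2 hp3), sq_nonneg ε,
          mul_nonneg (sq_nonneg ε) (sub_nonneg.2 hp3)]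
  have hB : 1 - π ^ 2 / 36 * (1 + p + 4 * ε + 2 * ε ^ 2) ≤
      1 - π ^ 2 / 36 * ((1 + p) * t ^ 2) := by gcongr
  have hprod : (1 - ε - p) * (1 - π ^ 2 / 36 * (1 + p + 4 * ε + 2 * ε ^ 2)) ≤
      K * (2 / (K * M * m)) * S := by
    rcases le_total 0 (1 - π ^ 2 / 36 * (1 + p + 4 * ε + 2 * ε ^ 2)) with h | h
    · exact (mul_le_mul hA hB h (by linarith)).trans hfirst
    · exact (mul_nonpos_of_nonneg_of_nonpos hA0.le h).trans hfirst0
  have hlast : p - k * p - ε < (1 - k) * p * t := by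
    have hc : 0 ≤ (1 - k) * p := mul_nonneg (by linarith) hp0.le
    have hc1 : (1 - k) * p < 1 := by linarith [mul_pos hk0 hp0, sub_mul 1 k p]
    have e1 := mul_nonneg hc (sub_nonneg.2 h1.le)
    have e2 := mul_pos hε (sub_pos.2 hc1)
    linarith
  linarith

theorem stmt_7 (κ r' n n₀ m : ℕ) (hκ : 1 ≤ κ) (hr'3 : 3 ≤ r') (hodd : Odd r')
    (r : ℕ) (hr : r = 2 ^ κ * r')
    (hn₀ : 0 < n₀) (hnn₀ : n₀ < n) (hr2 : r < 2 ^ n₀) (hm : 0 < m)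
    (hm1 : (2 : ℝ) ^ n / r - 1 < m) (hm2 : (m : ℝ) < 2 ^ n / r + 1) :
    (2 : ℝ) ^ κ * (2 / ((2 : ℝ) ^ n * m)) *
        ∑ j ∈ Finset.Icc 1 ((r' - 1) / 2),
          Real.sin (π * m * j / (2 : ℝ) ^ ((n : ℤ) - κ)) ^ 2 /
            Real.sin (π * j / (2 : ℝ) ^ ((n : ℤ) - κ)) ^ 2
      + ((2 : ℝ) ^ κ - 1) * m / 2 ^ n
      >
    (1 - 1 / (2 : ℝ) ^ ((n : ℤ) - n₀) - 1 / r') *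
        (1 - (π ^ 2 / 36) * (((r' : ℝ) + 1) / r' + 1 / (2 : ℝ) ^ ((n : ℤ) - n₀ - 2)
          + 1 / (2 : ℝ) ^ (2 * ((n : ℤ) - n₀) - 1)))
      + 1 / (r' : ℝ) - 1 / ((2 : ℝ) ^ κ * r') - 1 / (2 : ℝ) ^ ((n : ℤ) - n₀) := by
  obtain ⟨J, hJ⟩ := hodd
  have hJ2 : (r' - 1) / 2 = J := by omega
  have hqJ : (r' : ℝ) = 2 * J + 1 := by rw [hJ]; push_cast; ring
  have hr'0 : (0 : ℝ) < r' := by exact_mod_cast (by omega : 0 < r')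
  have hm0 : (0 : ℝ) < m := by exact_mod_cast hm
  obtain ⟨d, hd⟩ : ∃ d, n = n₀ + 1 + d := ⟨n - n₀ - 1, by omega⟩
  have hK1 : (1 : ℝ) ≤ 2 ^ κ := one_le_pow₀ (by norm_num)
  have hM0 : (0 : ℝ) < (2 : ℝ) ^ ((n : ℤ) - κ) := by positivity
  have hN : (2 : ℝ) ^ n = 2 ^ κ * (2 : ℝ) ^ ((n : ℤ) - κ) := by
    rw [← zpow_natCast, ← zpow_natCast, ← zpow_add₀ (by norm_num)]
    congr 1; ring
  have hD : (2 : ℝ) ^ ((n : ℤ) - n₀) = 2 ^ (d + 1) := by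
    rw [← zpow_natCast]; congr 1; rw [hd]; push_cast; ring
  have h4 : 1 / (2 : ℝ) ^ ((n : ℤ) - n₀ - 2) = 4 * (1 / (2 : ℝ) ^ ((n : ℤ) - n₀)) := by
    rw [zpow_sub₀ (by norm_num : (2 : ℝ) ≠ 0) _ 2]
    field_simp
    norm_num
  have h5 : 1 / (2 : ℝ) ^ (2 * ((n : ℤ) - n₀) - 1) = 2 * (1 / (2 : ℝ) ^ ((n : ℤ) - n₀)) ^ 2 := by
    rw [zpow_sub₀ (by norm_num : (2 : ℝ) ≠ 0) _ 1, two_mul, zpow_add₀ (by norm_num : (2 : ℝ) ≠ 0)]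
    field_simp
  have hrR : (r : ℝ) = 2 ^ κ * r' := by rw [hr]; push_cast; ring
  have hr2R : (r : ℝ) < 2 ^ n₀ := by exact_mod_cast hr2
  have hr0 : (0 : ℝ) < r := by rw [hrR]; positivity
  have hNe : (2 : ℝ) ^ n = 2 ^ n₀ * 2 ^ (d + 1) := by rw [hd, ← pow_add]; congr 1; ring
  have hD2 : (2 : ℝ) ≤ 2 ^ (d + 1) := by
    rw [pow_succ]; linarith [one_le_pow₀ (by norm_num : (1 : ℝ) ≤ 2) (n := d)]
  have hrN : (r : ℝ) / 2 ^ n < 1 / 2 ^ (d + 1) := by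
    rw [hNe, div_lt_div_iff₀ (by positivity) (by positivity)]
    nlinarith
  have hε2 : 1 / (2 : ℝ) ^ (d + 1) ≤ 1 / 2 := one_div_le_one_div_of_le (by norm_num) hD2
  have ht : (m : ℝ) * r' / (2 : ℝ) ^ ((n : ℤ) - κ) = m * (r / 2 ^ n) := by
    rw [hrR, hN]; field_simp
  have hinv : (2 : ℝ) ^ n / r * (r / 2 ^ n) = 1 := by field_simp
  have hc0 : 0 < (r : ℝ) / 2 ^ n := by positivity
  have hqM : (r' : ℝ) < (2 : ℝ) ^ ((n : ℤ) - κ) := by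
    have : (2 : ℝ) ^ κ * r' < 2 ^ κ * (2 : ℝ) ^ ((n : ℤ) - κ) := by
      rw [← hN, ← hrR, hNe]
      nlinarith [pow_pos (by norm_num : (0 : ℝ) < 2) n₀]
    exact lt_of_mul_lt_mul_left this (by positivity)
  rw [gt_iff_lt, h4, h5, hJ2, hN]
  refine core J (by omega) hqJ hK1 hM0 hm0 (by positivity) (by rw [hD]; exact hε2) hqM ?_ ?_
  · rw [ht, hD]
    nlinarith [mul_lt_mul_of_pos_right hm1 hc0]
  · rw [ht, hD]
    nlinarith [mul_lt_mul_of_pos_right hm2 hc0]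
end

section
/- Let h be a nonzero integer and let r' ≥ 3 be an odd integer. Then (1/r') · ∑_{j=1}^{(r'−1)/2} sin²(π·j/r') / (j/r' + h)² ≥ ∫_0^{1/2 − 1/(2r')} sin²(πx)/(x + h)² dx. -/
open Real intervalIntegral

/-! Write `N = r' = 2n + 1`, `δ = 1 / N`, `b = n δ = 1/2 - δ/2`, `s(x) = sin² (π x)` and
`w(x) = 1 / (x + h)²`. The left-hand side is the right-endpoint Riemann sum of `s w` on `[0, b]`.

If `h < 0`, then `s w` is increasing on `[0, 1/2]` and the inequality is immediate.

If `h ≥ 1`, then `s w` decreases near `1/2`. Split `s w = P - G` with `P = s v`, `G = s (v - w)` and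
`v = κ (1 - γ s)`, where `κ`, `γ` are chosen so that `v - w` is nonnegative and increasing; then `G`
is increasing too, and its Riemann sum exceeds its integral by at most `δ G(b) ≤ δ G(1/2)`
(`sum_sub_integral_le`). On the other hand `P` is a combination of `sin² (π x)` and `sin² (2 π x)`,
whose Riemann sums are both exactly `1/4` and whose integrals are explicit, so that the Riemann sum
of `P` exceeds its integral by at least `δ κ (1 - γ) (1/4 + 1/(2π))` (`excess_trig`).
It remains to see that `G(1/2) ≤ κ (1 - γ) (1/4 + 1/(2π))`. For `h ≥ 2` the choice `κ = 1/h²`, `γ = 0`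
works; for `h = 1` it narrowly fails, and `κ = 1`, `γ = 1/4` works. -/

lemma sum_sin_sq_telescope (θ : ℝ) (n : ℕ) :
    4 * sin θ * ∑ j ∈ Finset.Icc 1 n, sin (j * θ) ^ 2
      = (2 * n + 1) * sin θ - sin ((2 * n + 1) * θ) := by
  induction n with
  | zero => simp
  | succ n ih =>
    rw [Finset.sum_Icc_succ_top (by omega), mul_add, ih]
    push_cast
    have e1 : (2 * ((n : ℝ) + 1) + 1) * θ = 2 * (((n : ℝ) + 1) * θ) + θ := by ring
    have e2 : (2 * (n : ℝ) + 1) * θ = 2 * (((n : ℝ) + 1) * θ) - θ := by ring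
    rw [e1, e2, sin_add, sin_sub, cos_two_mul, cos_sq']
    ring

/-- When `(2n+1) θ = k π` and `sin θ ≠ 0`, the sum of `sin² (j θ)` over half a period is exact. -/
lemma sum_sin_sq (θ : ℝ) (n : ℕ) (h0 : sin θ ≠ 0) (h1 : sin ((2 * n + 1) * θ) = 0) :
    ∑ j ∈ Finset.Icc 1 n, sin (j * θ) ^ 2 = (2 * n + 1) / 4 := by
  have h := sum_sin_sq_telescope θ n
  rw [h1] at h
  have : sin θ * (4 * ∑ j ∈ Finset.Icc 1 n, sin (j * θ) ^ 2) = sin θ * (2 * n + 1) := by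
    linarith
  have := mul_left_cancel₀ h0 this
  linarith

lemma integral_sin_sq_mul (c b : ℝ) (hc : c ≠ 0) :
    ∫ x in (0 : ℝ)..b, sin (c * x) ^ 2 = b / 2 - sin (2 * (c * b)) / (4 * c) := by
  rw [intervalIntegral.integral_comp_mul_left (fun y => sin y ^ 2) hc, integral_sin_sq,
    sin_two_mul]
  simp only [mul_zero, sin_zero, smul_eq_mul]
  field_simp
  ring

lemma integral_le_sum_of_monotoneOn {f : ℝ → ℝ} {δ : ℝ} (hδ : 0 < δ) (n : ℕ)
    (hf : MonotoneOn f (Set.Icc 0 (n * δ))) :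
    ∫ x in (0 : ℝ)..(n * δ), f x ≤ δ * ∑ j ∈ Finset.Icc 1 n, f (j * δ) := by
  have hg : MonotoneOn (fun t => f (t * δ)) (Set.Icc (0 : ℝ) (0 + n)) := by
    intro x hx y hy hxy
    simp only [zero_add, Set.mem_Icc] at hx hy
    exact hf ⟨by nlinarith, by nlinarith⟩ ⟨by nlinarith, by nlinarith⟩ (by nlinarith)
  have h := hg.integral_le_sum
  rw [intervalIntegral.integral_comp_mul_right f hδ.ne', smul_eq_mul] at h
  simp only [zero_add, zero_mul] at h
  rw [Finset.range_eq_Ico, Finset.sum_Ico_add' (fun j : ℕ => f (j * δ)) 0 n 1] at h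
  rw [inv_mul_le_iff₀ hδ] at h
  exact h

/-- The right-endpoint sum of an increasing function differs from the left-endpoint sum, which is at
most the integral, only by its end terms. -/
lemma sum_sub_integral_le {f : ℝ → ℝ} {δ : ℝ} (hδ : 0 < δ) (n : ℕ)
    (hf : MonotoneOn f (Set.Icc 0 (n * δ))) :
    δ * ∑ j ∈ Finset.Icc 1 n, f (j * δ) - ∫ x in (0 : ℝ)..(n * δ), f x
      ≤ δ * (f (n * δ) - f 0) := by
  have hg : MonotoneOn (fun t => f (t * δ)) (Set.Icc (0 : ℝ) (0 + n)) := by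
    intro x hx y hy hxy
    simp only [zero_add, Set.mem_Icc] at hx hy
    exact hf ⟨by nlinarith, by nlinarith⟩ ⟨by nlinarith, by nlinarith⟩ (by nlinarith)
  have h := hg.sum_le_integral
  rw [intervalIntegral.integral_comp_mul_right f hδ.ne', smul_eq_mul] at h
  simp only [zero_add, zero_mul] at h
  rw [le_inv_mul_iff₀ hδ] at h
  have e : ∑ j ∈ Finset.Icc 1 n, f (j * δ)
      = ∑ i ∈ Finset.range n, f (i * δ) + (f (n * δ) - f 0) := by
    have h1 : ∑ j ∈ Finset.Icc 1 n, f (j * δ)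
        = ∑ i ∈ Finset.range n, f (((i + 1 : ℕ) : ℝ) * δ) := by
      rw [Finset.range_eq_Ico, Finset.sum_Ico_add' (fun j : ℕ => f (j * δ)) 0 n 1]
      rfl
    have h2 := Finset.sum_range_sub (fun i : ℕ => f ((i : ℝ) * δ)) n
    rw [Finset.sum_sub_distrib] at h2
    simp only [Nat.cast_zero, zero_mul] at h2
    linarith
  rw [e, mul_add]
  linarith

lemma monotoneOn_sin_sq : MonotoneOn (fun x => sin (π * x) ^ 2) (Set.Icc 0 (1 / 2)) := by
  intro x hx y hy hxy
  have hπ := pi_pos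
  have h0 : 0 ≤ sin (π * x) :=
    sin_nonneg_of_nonneg_of_le_pi (by nlinarith [hx.1]) (by nlinarith [hx.2])
  have h1 : sin (π * x) ≤ sin (π * y) :=
    sin_le_sin_of_le_of_le_pi_div_two (by nlinarith [hx.1]) (by nlinarith [hy.2])
      (by nlinarith)
  exact pow_le_pow_left₀ h0 h1 2

/-- The excess of the right-endpoint sum over the integral for `sin² (π x) (1 - γ sin² (π x))`, which
is rewritten as `(1 - γ) sin² (π x) + (γ / 4) sin² (2 π x)`. -/
lemma excess_trig (n : ℕ) (hn : 1 ≤ n) (δ : ℝ) (hδ : (2 * n + 1) * δ = 1) (γ : ℝ)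
    (hγ0 : 0 ≤ γ) (hγ1 : γ ≤ 1) :
    δ * ((1 - γ) * (1 / 4 + 1 / (2 * π))) ≤
      δ * ∑ j ∈ Finset.Icc 1 n,
          sin (π * (j * δ)) ^ 2 * (1 - γ * sin (π * (j * δ)) ^ 2)
        - ∫ x in (0 : ℝ)..(n * δ), sin (π * x) ^ 2 * (1 - γ * sin (π * x) ^ 2) := by
  have hπ := pi_pos
  have hn' : (1 : ℝ) ≤ n := by exact_mod_cast hn
  have hδ0 : 0 < δ := by
    by_contra hcon
    nlinarith
  have hδ3 : δ ≤ 1 / 3 := by nlinarith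
  have hpt : ∀ x : ℝ, sin (π * x) ^ 2 * (1 - γ * sin (π * x) ^ 2)
      = (1 - γ) * sin (π * x) ^ 2 + γ / 4 * sin (2 * π * x) ^ 2 := by
    intro x
    rw [mul_assoc 2 π x, sin_two_mul, mul_pow, mul_pow, cos_sq']
    ring
  simp only [hpt]
  rw [intervalIntegral.integral_add
      ((by fun_prop : Continuous fun x : ℝ => (1 - γ) * sin (π * x) ^ 2).intervalIntegrable _ _)
      ((by fun_prop : Continuous fun x : ℝ =>
        γ / 4 * sin (2 * π * x) ^ 2).intervalIntegrable _ _),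
    intervalIntegral.integral_const_mul, intervalIntegral.integral_const_mul,
    integral_sin_sq_mul _ _ hπ.ne', integral_sin_sq_mul _ _ (by positivity),
    Finset.sum_add_distrib, ← Finset.mul_sum, ← Finset.mul_sum]
  have s1 : ∑ j ∈ Finset.Icc 1 n, sin (π * (j * δ)) ^ 2 = (2 * n + 1) / 4 := by
    rw [← sum_sin_sq (π * δ) n]
    · refine Finset.sum_congr rfl fun j _ => ?_
      congr 2
      ring
    · exact (sin_pos_of_pos_of_lt_pi (by positivity) (by nlinarith)).ne'
    · rw [show (2 * (n : ℝ) + 1) * (π * δ) = π by linear_combination π * hδ, sin_pi]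
  have s2 : ∑ j ∈ Finset.Icc 1 n, sin (2 * π * (j * δ)) ^ 2 = (2 * n + 1) / 4 := by
    rw [← sum_sin_sq (2 * π * δ) n]
    · refine Finset.sum_congr rfl fun j _ => ?_
      congr 2
      ring
    · exact (sin_pos_of_pos_of_lt_pi (by positivity) (by nlinarith)).ne'
    · rw [show (2 * (n : ℝ) + 1) * (2 * π * δ) = 2 * π by linear_combination 2 * π * hδ,
        sin_two_pi]
  have hb : (n : ℝ) * δ = 1 / 2 - δ / 2 := by linarith
  have t1 : sin (2 * (π * (n * δ))) = sin (π * δ) := by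
    rw [hb, ← sin_pi_sub]
    congr 1
    ring
  have t2 : sin (2 * (2 * π * (n * δ))) = -sin (2 * π * δ) := by
    rw [hb, ← sin_two_pi_sub]
    congr 1
    ring
  have b1 : 2 * δ ≤ sin (π * δ) := by
    have := mul_le_sin (x := π * δ) (by positivity) (by nlinarith)
    have e : 2 / π * (π * δ) = 2 * δ := by field_simp
    linarith
  have b2 : sin (2 * π * δ) ≤ 2 * π * δ := sin_le (by positivity)
  have c1 : δ / (2 * π) ≤ sin (π * δ) / (4 * π) := by
    rw [div_le_div_iff₀ (by positivity) (by positivity)]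
    nlinarith
  have c2 : sin (2 * π * δ) / (4 * (2 * π)) ≤ δ / 4 := by
    rw [div_le_div_iff₀ (by positivity) (by positivity)]
    nlinarith
  rw [s1, s2, t1, t2, hb, neg_div]
  have hδ' : δ * ((2 * n + 1) / 4) = 1 / 4 := by linarith
  have d1 : δ * (1 / 4 + 1 / (2 * π))
      ≤ 1 / 4 - ((1 / 2 - δ / 2) / 2 - sin (π * δ) / (4 * π)) := by
    have : δ * (1 / 4 + 1 / (2 * π)) = δ / 4 + δ / (2 * π) := by ring
    linarith
  have d2 : 0 ≤ 1 / 4 - ((1 / 2 - δ / 2) / 2 - -(sin (2 * π * δ) / (4 * (2 * π)))) := by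
    linarith
  have d3 := mul_le_mul_of_nonneg_left d1 (sub_nonneg.2 hγ1)
  have d4 := mul_nonneg (div_nonneg hγ0 (by norm_num : (0 : ℝ) ≤ 4)) d2
  have e : δ * ((1 - γ) * ((2 * n + 1) / 4) + γ / 4 * ((2 * n + 1) / 4))
      = (1 - γ) * (1 / 4) + γ / 4 * (1 / 4) := by
    linear_combination (1 - γ + γ / 4) * hδ'
  rw [e]
  linarith

/-- The inequality for a general continuous weight `w`, given a majorant `v = κ (1 - γ sin² (π x))`
of `w` such that `v - w` is increasing and small enough at `1/2`. -/
lemma weighted_inequality (w : ℝ → ℝ) (hw : ContinuousOn w (Set.Icc 0 (1 / 2)))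
    (κ γ : ℝ) (hκ : 0 ≤ κ) (hγ0 : 0 ≤ γ) (hγ1 : γ ≤ 1)
    (hmono : MonotoneOn (fun x => κ * (1 - γ * sin (π * x) ^ 2) - w x) (Set.Icc 0 (1 / 2)))
    (h0 : w 0 ≤ κ)
    (hhalf : κ * (1 - γ) - w (1 / 2) ≤ κ * ((1 - γ) * (1 / 4 + 1 / (2 * π))))
    (n : ℕ) (hn : 1 ≤ n) (δ : ℝ) (hδ : (2 * n + 1) * δ = 1) :
    ∫ x in (0 : ℝ)..(n * δ), sin (π * x) ^ 2 * w x
      ≤ δ * ∑ j ∈ Finset.Icc 1 n, sin (π * (j * δ)) ^ 2 * w (j * δ) := by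
  have hn' : (1 : ℝ) ≤ n := by exact_mod_cast hn
  have hδ0 : 0 < δ := by
    by_contra hcon
    nlinarith
  have hb0 : 0 ≤ (n : ℝ) * δ := by positivity
  have hb : (n : ℝ) * δ ≤ 1 / 2 := by linarith
  set P : ℝ → ℝ := fun x => sin (π * x) ^ 2 * (1 - γ * sin (π * x) ^ 2) with hP
  set G : ℝ → ℝ := fun x => sin (π * x) ^ 2 * (κ * (1 - γ * sin (π * x) ^ 2) - w x) with hG
  have hpos : ∀ x ∈ Set.Icc (0 : ℝ) (1 / 2), 0 ≤ κ * (1 - γ * sin (π * x) ^ 2) - w x := by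
    intro x hx
    have := hmono (by norm_num : (0 : ℝ) ∈ Set.Icc (0 : ℝ) (1 / 2)) hx hx.1
    simp at this
    linarith
  have hGm : MonotoneOn G (Set.Icc 0 (1 / 2)) :=
    monotoneOn_sin_sq.mul hmono (fun x _ => sq_nonneg _) hpos
  have hGle : G (n * δ) ≤ κ * ((1 - γ) * (1 / 4 + 1 / (2 * π))) := by
    refine (hGm ⟨hb0, hb⟩ (by norm_num) hb).trans ?_
    have : sin (π * (1 / 2)) = 1 := by rw [mul_one_div, sin_pi_div_two]
    simp only [hG, this]
    linarith
  have hG0 : G 0 = 0 := by simp [hG]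
  have hGs := sum_sub_integral_le hδ0 n (hGm.mono (Set.Icc_subset_Icc_right hb))
  have hPs := excess_trig n hn δ hδ γ hγ0 hγ1
  have hsplit : ∀ x, sin (π * x) ^ 2 * w x = κ * P x - G x := by
    intro x
    simp only [hP, hG]
    ring
  have hPi : IntervalIntegrable (fun x => κ * P x) MeasureTheory.volume 0 (n * δ) :=
    (by fun_prop : Continuous fun x => κ * P x).intervalIntegrable _ _
  have hGi : IntervalIntegrable G MeasureTheory.volume 0 (n * δ) := by
    apply ContinuousOn.intervalIntegrable
    rw [Set.uIcc_of_le hb0]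
    have := hw.mono (Set.Icc_subset_Icc_right hb)
    fun_prop
  simp only [hsplit]
  rw [intervalIntegral.integral_sub hPi hGi, intervalIntegral.integral_const_mul,
    Finset.sum_sub_distrib, ← Finset.mul_sum]
  have k1 := mul_le_mul_of_nonneg_left hPs hκ
  have k2 := mul_le_mul_of_nonneg_left hGle hδ0.le
  rw [hG0, sub_zero] at hGs
  simp only [← hP] at k1
  change κ * (δ * ((1 - γ) * (1 / 4 + 1 / (2 * π)))) ≤
    κ * (δ * ∑ j ∈ Finset.Icc 1 n, P (j * δ) - ∫ x in (0 : ℝ)..(n * δ), P x) at k1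
  linarith

/-- For `h = 1`, the difference between the majorant `1 - sin² (π x) / 4` and the weight is
increasing. -/
lemma monotoneOn_majorant_one :
    MonotoneOn (fun x => 1 * (1 - 1 / 4 * sin (π * x) ^ 2) - 1 / (x + 1) ^ 2)
      (Set.Icc (0 : ℝ) (1 / 2)) := by
  have hd : ∀ x ∈ Set.Icc (0 : ℝ) (1 / 2),
      HasDerivAt (fun x => 1 * (1 - 1 / 4 * sin (π * x) ^ 2) - 1 / (x + 1) ^ 2)
        (2 / (x + 1) ^ 3 - π / 4 * sin (2 * (π * x))) x := by
    intro x hx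
    have hx1 : x + 1 ≠ 0 := by linarith [hx.1]
    have hs : HasDerivAt (fun x => sin (π * x)) (cos (π * x) * π) x := by
      simpa using ((hasDerivAt_id x).const_mul π).sin
    have hr : HasDerivAt (fun x : ℝ => (x + 1) ^ 2) (2 * (x + 1)) x := by
      have := ((hasDerivAt_id' x).add_const 1).fun_pow 2
      simpa using this
    refine HasDerivAt.congr_deriv (((((hs.fun_pow 2).const_mul (1 / 4)).const_sub 1).const_mul 1).sub
      ((hasDerivAt_const x (1 : ℝ)).div hr (pow_ne_zero 2 hx1))) ?_
    rw [sin_two_mul]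
    field_simp
    ring
  refine monotoneOn_of_deriv_nonneg (convex_Icc _ _)
    (fun x hx => (hd x hx).continuousAt.continuousWithinAt)
    (fun x hx => (hd x (interior_subset hx)).differentiableAt.differentiableWithinAt)
    (fun x hx => ?_)
  have hx' := interior_subset hx
  rw [(hd x hx').deriv]
  obtain ⟨hx0, hx2⟩ := hx'
  have hπ := pi_pos
  have hπ' := pi_lt_d2
  rw [sub_nonneg, le_div_iff₀ (by positivity)]
  -- Below `7/20` the bound `sin ≤ 1` suffices; above it, `sin (2πx) ≤ π - 2πx` is needed.
  rcases le_total x (7 / 20) with h | h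
  · have h1 : (x + 1) ^ 3 ≤ (27 / 20) ^ 3 := pow_le_pow_left₀ (by linarith) (by linarith) 3
    have h2 : π / 4 * sin (2 * (π * x)) ≤ 63 / 80 := by
      nlinarith [sin_le_one (2 * (π * x))]
    calc π / 4 * sin (2 * (π * x)) * (x + 1) ^ 3
        ≤ 63 / 80 * (27 / 20) ^ 3 := mul_le_mul h2 h1 (by positivity) (by norm_num)
      _ ≤ 2 := by norm_num
  · have h1 : sin (2 * (π * x)) ≤ π - 2 * (π * x) := by
      rw [← sin_pi_sub]
      exact sin_le (by nlinarith)
    have h2 : π ^ 2 ≤ 10 := by nlinarith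
    have h3 : π / 4 * sin (2 * (π * x)) ≤ 5 * (1 / 2 - x) := by
      have := mul_le_mul_of_nonneg_left h1 (by positivity : 0 ≤ π / 4)
      have := mul_le_mul_of_nonneg_right h2 (by linarith : 0 ≤ 1 / 2 - x)
      nlinarith
    have h4 : 5 * (1 / 2 - x) * (x + 1) ^ 3 ≤ 2 := by
      obtain ⟨t, rfl⟩ : ∃ t, x = 7 / 20 + t := ⟨x - 7 / 20, by ring⟩
      have ht : 0 ≤ t := by linarith
      nlinarith [pow_nonneg ht 2, pow_nonneg ht 3, pow_nonneg ht 4]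
    exact (mul_le_mul_of_nonneg_right h3 (by positivity)).trans h4

theorem stmt_15 (h : ℤ) (hh : h ≠ 0) (r' : ℕ) (hr'3 : 3 ≤ r') (hodd : Odd r') :
    (1 / (r' : ℝ)) *
        ∑ j ∈ Finset.Icc 1 ((r' - 1) / 2),
          Real.sin (π * j / r') ^ 2 / ((j : ℝ) / r' + h) ^ 2
      ≥
    ∫ x in (0 : ℝ)..(1 / 2 - 1 / (2 * r')),
      Real.sin (π * x) ^ 2 / (x + h) ^ 2 := by
  obtain ⟨n, rfl⟩ := hodd
  have hn : 1 ≤ n := by omega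
  rw [show (2 * n + 1 - 1) / 2 = n by omega]
  set δ : ℝ := 1 / ((2 * n + 1 : ℕ) : ℝ) with hδdef
  have hδ : (2 * n + 1) * δ = 1 := by
    rw [hδdef]
    push_cast
    field_simp
  have hδ0 : 0 < δ := by positivity
  have hb : (1 / 2 - 1 / (2 * ((2 * n + 1 : ℕ) : ℝ))) = n * δ := by
    rw [hδdef]
    push_cast
    field_simp
    ring
  have hb2 : (n : ℝ) * δ ≤ 1 / 2 := by linarith
  have hterm : ∀ j : ℕ, sin (π * j / ((2 * n + 1 : ℕ) : ℝ)) ^ 2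
        / ((j : ℝ) / ((2 * n + 1 : ℕ) : ℝ) + h) ^ 2
      = sin (π * (j * δ)) ^ 2 * (1 / (j * δ + h) ^ 2) := by
    intro j
    rw [hδdef, mul_one_div, mul_one_div, mul_div_assoc]
  have hint : ∀ x : ℝ, sin (π * x) ^ 2 / (x + h) ^ 2 = sin (π * x) ^ 2 * (1 / (x + h) ^ 2) :=
    fun x => (mul_one_div _ _).symm
  rw [hb, ge_iff_le]
  simp only [hterm, hint]
  rcases lt_or_gt_of_ne hh with hneg | hpos
  · have hH : (h : ℝ) ≤ -1 := by exact_mod_cast (by omega : h ≤ -1)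
    refine integral_le_sum_of_monotoneOn
      (f := fun x => sin (π * x) ^ 2 * (1 / (x + h) ^ 2)) hδ0 n ?_
    refine MonotoneOn.mono ?_ (Set.Icc_subset_Icc_right hb2)
    refine monotoneOn_sin_sq.mul ?_ (fun x _ => sq_nonneg _) (fun x _ => by positivity)
    intro x hx y hy hxy
    have hy0 : y + h < 0 := by linarith [hy.2]
    exact one_div_le_one_div_of_le (sq_pos_of_neg hy0) (by nlinarith)
  · have hπ := pi_pos
    have hπ' := pi_lt_d4
    have hinv : 0.15915 ≤ 1 / (2 * π) := by
      rw [le_div_iff₀ (by positivity)]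
      linarith
    have hH : (1 : ℝ) ≤ h := by exact_mod_cast (by omega : 1 ≤ h)
    have hw : ContinuousOn (fun x : ℝ => 1 / (x + h) ^ 2) (Set.Icc 0 (1 / 2)) := by
      refine ContinuousOn.div (by fun_prop) (by fun_prop) fun x hx => ?_
      have : 0 < x + h := by linarith [hx.1]
      positivity
    rcases eq_or_lt_of_le (by omega : 1 ≤ h) with rfl | h2
    · refine weighted_inequality _ hw 1 (1 / 4) (by norm_num) (by norm_num) (by norm_num)
        ?_ ?_ ?_ n hn δ hδ
      · simpa only [Int.cast_one] using monotoneOn_majorant_one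
      · norm_num
      · norm_num at hinv ⊢
        linarith
    · have hH2 : (2 : ℝ) ≤ h := by exact_mod_cast (by omega : 2 ≤ h)
      refine weighted_inequality _ hw (1 / (h : ℝ) ^ 2) 0 (by positivity) le_rfl zero_le_one
        ?_ ?_ ?_ n hn δ hδ
      · intro x hx y hy hxy
        have hx0 := hx.1
        have : 1 / (y + (h : ℝ)) ^ 2 ≤ 1 / (x + (h : ℝ)) ^ 2 :=
          one_div_le_one_div_of_le (by positivity) (by nlinarith)
        simp only [zero_mul]
        linarith
      · simp
      · have k1 : 0.64 * (1 / (h : ℝ) ^ 2) ≤ 1 / (1 / 2 + (h : ℝ)) ^ 2 := by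
          rw [mul_one_div, div_le_div_iff₀ (by positivity) (by positivity)]
          nlinarith
        have k2 : 0 ≤ 1 / (h : ℝ) ^ 2 := by positivity
        have k3 := mul_le_mul_of_nonneg_left hinv k2
        simp only [sub_zero, mul_one, one_mul]
        rw [mul_add]
        linarith
end
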